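/- arXiv:1802.02074 — 6 statements merged into one kernel-verified Lean document; each statement's English description precedes it below -/
import Mathlib

section
/- Let a be an additive and positive parametric sequence, J ≥ 2, θ ∈ (0,∞)^J, p a pmf on ℕ, and let P be the convolution splitting distribution P(y) = p(|y|)·∏_{j=1}^{J} a_{θ_j}(y_j)/a_{|θ|}(|y|) on ℕ^J. Let I be a nonempty proper subset of {1,…,J}. Then for every n ∈ ℕ, the marginal sum satisfies ∑_{y ∈ ℕ^J : ∑_{j∈I} y_j = n} P(y) = ∑_{k ≥ n} (a_{|θ_I|}(n)·a_{|θ_{−I}|}(k−n)/a_{|θ|}(k))·p(k), where |θ_I| = ∑_{j∈I} θ_j and |θ_{−I}| = ∑_{j∉I} θ_j. -/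
/-!
Additivity says that the generating series `A θ = ∑ₙ a θ n Xⁿ` satisfy `A θ * A θ' = A (θ + θ')`, so
`∏ⱼ A (θ j) = A |θ|` over any nonempty set of indices; comparing coefficients, the weights
`∏ⱼ a (θ j) (y j)` of the `y` with `|y| = n` add up to `a |θ| n`. A vector `y` with `|y_I| = n` and
`|y| = n + m` is a pair of vectors on `I` and on its complement with sums `n` and `m`, so the
weights of these `y` add up to `a |θ_I| n * a |θ_{-I}| m`. The theorem follows by summing over the
level sets of `|y|`. These are finite and `P` has constant sign on each of them, so the regrouping
is legitimate, for an arbitrary `p`, in both directions.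
-/

open Finset PowerSeries

section Regrouping

variable {α β : Type*} {g : α → β} {t : β → Finset α} {w : α → ℝ}

/-- The decomposition of `α` into the fibers of `g`, given as finsets `t b`. -/
def sigmaFinsetFiberEquiv (ht : ∀ b x, x ∈ t b ↔ g x = b) : (Σ b, t b) ≃ α :=
  (Equiv.sigmaCongrRight fun b ↦ Equiv.subtypeEquivRight (ht b)).trans (Equiv.sigmaFiberEquiv g)

theorem summable_comp_mul_of_summable_mul_sum (hw : ∀ x, 0 ≤ w x)
    (ht : ∀ b x, x ∈ t b ↔ g x = b) {c : β → ℝ} (h : Summable fun b ↦ c b * ∑ x ∈ t b, w x) :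
    Summable fun x ↦ c (g x) * w x := by
  have abs_fiber_sum (b : β) : ∑ x ∈ t b, |c (g x) * w x| = |c b * ∑ x ∈ t b, w x| := by
    rw [abs_mul, abs_of_nonneg (sum_nonneg fun x _ ↦ hw x), mul_sum]
    refine sum_congr rfl fun x hx ↦ ?_
    rw [(ht b x).1 hx, abs_mul, abs_of_nonneg (hw x)]
  rw [← summable_abs_iff, ← (sigmaFinsetFiberEquiv ht).summable_iff]
  refine (summable_sigma_of_nonneg fun _ ↦ abs_nonneg _).2
    ⟨fun b ↦ Summable.of_finite, h.abs.congr fun b ↦ ?_⟩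
  exact ((t b).tsum_subtype fun x ↦ |c (g x) * w x|).trans (abs_fiber_sum b) |>.symm

theorem hasSum_comp_mul_iff_hasSum_mul_sum (hw : ∀ x, 0 ≤ w x)
    (ht : ∀ b x, x ∈ t b ↔ g x = b) {c : β → ℝ} {s : ℝ} :
    HasSum (fun x ↦ c (g x) * w x) s ↔ HasSum (fun b ↦ c b * ∑ x ∈ t b, w x) s := by
  have hasSum_fiber (b : β) :
      HasSum (fun x : t b ↦ c (g x) * w x) (c b * ∑ x ∈ t b, w x) := by
    rw [mul_sum, sum_congr rfl fun x hx ↦ by rw [← (ht b x).1 hx]]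
    exact (t b).hasSum fun x ↦ c (g x) * w x
  rw [← (sigmaFinsetFiberEquiv ht).hasSum_iff]
  refine ⟨fun h ↦ h.sigma hasSum_fiber, fun h ↦ h.sigma_of_hasSum hasSum_fiber ?_⟩
  exact (sigmaFinsetFiberEquiv ht).summable_iff.2
    (summable_comp_mul_of_summable_mul_sum hw ht h.summable)

end Regrouping

section Antidiagonal

variable {ι : Type*} [Fintype ι] [DecidableEq ι] {R : Type*} [CommSemiring R]

theorem mem_piAntidiag_univ {y : ι → ℕ} {n : ℕ} : y ∈ univ.piAntidiag n ↔ ∑ j, y j = n := by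
  simp

theorem coeff_prod_mk_eq_sum_piAntidiag (f : ι → ℕ → R) (n : ℕ) :
    coeff n (∏ j, mk (f j)) = ∑ y ∈ univ.piAntidiag n, ∏ j, f j (y j) := by
  simp only [coeff_prod, coeff_mk]
  exact sum_equiv Finsupp.equivFunOnFinite (by simp) (by simp)

theorem sum_piAntidiag_add_with_sum_eq (f : ι → ℕ → R) (I : Finset ι) (n m : ℕ) :
    ∑ y ∈ univ.piAntidiag (n + m) with ∑ j ∈ I, y j = n, ∏ j, f j (y j) =
      (∑ u ∈ univ.piAntidiag n, ∏ j : {j // j ∈ I}, f j (u j)) *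
        ∑ v ∈ univ.piAntidiag m, ∏ j : {j // j ∉ I}, f j (v j) := by
  rw [sum_mul_sum, ← sum_product']
  refine sum_equiv (Equiv.piEquivPiSubtypeProd (· ∈ I) fun _ ↦ ℕ) (fun y ↦ ?_) fun y _ ↦ ?_
  · have sum_mem : ∑ j : {j // j ∈ I}, y j = ∑ j ∈ I, y j := sum_coe_sort I y
    have sum_notMem : ∑ j : {j // j ∉ I}, y j = ∑ j ∈ Iᶜ, y j :=
      (sum_subtype Iᶜ (fun _ ↦ mem_compl) y).symm
    have sum_total := sum_add_sum_compl I y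
    simp only [mem_filter, mem_piAntidiag_univ, mem_product, Equiv.piEquivPiSubtypeProd_apply]
    omega
  · rw [← prod_mul_prod_compl I, prod_subtype I fun _ ↦ Iff.rfl,
      prod_subtype Iᶜ fun _ ↦ mem_compl]
    rfl

theorem sum_piAntidiag_add_with_sum_eq_coeff_mul_coeff (f : ι → ℕ → R) (I : Finset ι) (n m : ℕ) :
    ∑ y ∈ univ.piAntidiag (n + m) with ∑ j ∈ I, y j = n, ∏ j, f j (y j) =
      coeff n (∏ j ∈ I, mk (f j)) * coeff m (∏ j ∈ Iᶜ, mk (f j)) := by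
  rw [sum_piAntidiag_add_with_sum_eq, ← coeff_prod_mk_eq_sum_piAntidiag,
    ← coeff_prod_mk_eq_sum_piAntidiag, prod_subtype I fun _ ↦ Iff.rfl,
    prod_subtype Iᶜ fun _ ↦ mem_compl]

end Antidiagonal

section ConvolutionSplitting

variable {M ι : Type*} [AddCommMonoid M] [PartialOrder M]

/-- An additive parametric sequence: the convolution of `a θ` and `a θ'` is `a (θ + θ')`. The
parameters are the positive elements of an ordered monoid. -/
def IsAdditiveSequence {R : Type*} [CommSemiring R] (a : M → ℕ → R) : Prop :=
  ∀ θ θ' : M, 0 < θ → 0 < θ' → ∀ n : ℕ,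
    ∑ y ∈ range (n + 1), a θ y * a θ' (n - y) = a (θ + θ') n

/-- The convolution splitting distribution with parameters `θ`, as a function linear in the weights
`p` of the total; it is a pmf when `p` is. -/
noncomputable def convolutionSplitting [Fintype ι] (a : M → ℕ → ℝ) (θ : ι → M) (p : ℕ → ℝ)
    (y : ι → ℕ) : ℝ :=
  p (∑ j, y j) * (∏ j, a (θ j) (y j)) / a (∑ j, θ j) (∑ j, y j)

namespace IsAdditiveSequence

variable {R : Type*} [CommSemiring R] {a : M → ℕ → R}

theorem mk_mul_mk (ha : IsAdditiveSequence a) {θ θ' : M} (hθ : 0 < θ) (hθ' : 0 < θ') :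
    mk (a θ) * mk (a θ') = mk (a (θ + θ')) := by
  ext n
  simp only [coeff_mul, coeff_mk, ← ha θ θ' hθ hθ',
    Nat.sum_antidiagonal_eq_sum_range_succ fun i j ↦ a θ i * a θ' j]

theorem prod_mk [IsOrderedCancelAddMonoid M] (ha : IsAdditiveSequence a) {θ : ι → M}
    (hθ : ∀ j, 0 < θ j) {s : Finset ι} (hs : s.Nonempty) :
    ∏ j ∈ s, mk (a (θ j)) = mk (a (∑ j ∈ s, θ j)) := by
  induction hs using Finset.Nonempty.cons_induction with
  | singleton i => simp only [prod_singleton, sum_singleton]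
  | cons i s hi hs ih =>
    rw [prod_cons, sum_cons, ih, ha.mk_mul_mk (hθ i) (sum_pos (fun j _ ↦ hθ j) hs)]

theorem sum_piAntidiag_with_sum_eq [IsOrderedCancelAddMonoid M] [Fintype ι] [DecidableEq ι]
    (ha : IsAdditiveSequence a) {θ : ι → M} (hθ : ∀ j, 0 < θ j) {I : Finset ι} (hI : I.Nonempty)
    (hI' : I ≠ univ) {n k : ℕ} (hnk : n ≤ k) :
    ∑ y ∈ univ.piAntidiag k with ∑ j ∈ I, y j = n, ∏ j, a (θ j) (y j) =
      a (∑ j ∈ I, θ j) n * a (∑ j ∈ Iᶜ, θ j) (k - n) := by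
  obtain ⟨m, rfl⟩ := Nat.exists_eq_add_of_le hnk
  have hIc : Iᶜ.Nonempty := by rwa [nonempty_iff_ne_empty, ne_eq, compl_eq_empty_iff]
  rw [sum_piAntidiag_add_with_sum_eq_coeff_mul_coeff, ha.prod_mk hθ hI, ha.prod_mk hθ hIc,
    coeff_mk, coeff_mk, Nat.add_sub_cancel_left]

end IsAdditiveSequence

theorem marginal_sum_of_convolution_splitting_general [IsOrderedCancelAddMonoid M] [Fintype ι]
    [DecidableEq ι] {a : M → ℕ → ℝ} (ha_pos : ∀ θ : M, 0 < θ → ∀ y : ℕ, 0 < a θ y)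
    (ha_add : IsAdditiveSequence a) {θ : ι → M} (hθ : ∀ j, 0 < θ j) (p : ℕ → ℝ) {I : Finset ι}
    (hI : I.Nonempty) (hI' : I ≠ univ) (n : ℕ) {s : ℝ} :
    HasSum (fun y : {y : ι → ℕ // ∑ j ∈ I, y j = n} ↦ convolutionSplitting a θ p y) s ↔
      HasSum (fun k : {k : ℕ // n ≤ k} ↦
        a (∑ j ∈ I, θ j) n * a (∑ j ∈ Iᶜ, θ j) (k - n) / a (∑ j, θ j) k * p k) s := by
  let total (y : {y : ι → ℕ // ∑ j ∈ I, y j = n}) : {k : ℕ // n ≤ k} :=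
    ⟨∑ j, y.1 j, y.2.ge.trans (sum_le_sum_of_subset (subset_univ I))⟩
  let level (k : {k : ℕ // n ≤ k}) : Finset {y : ι → ℕ // ∑ j ∈ I, y j = n} :=
    (univ.piAntidiag k.1).subtype fun y ↦ ∑ j ∈ I, y j = n
  have mem_level (k) (y) : y ∈ level k ↔ total y = k := by
    simp only [level, total, mem_subtype, mem_piAntidiag_univ, Subtype.ext_iff]
  have sum_level (k) : ∑ y ∈ level k, ∏ j, a (θ j) (y.1 j) =
      a (∑ j ∈ I, θ j) n * a (∑ j ∈ Iᶜ, θ j) (k - n) := by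
    rw [← ha_add.sum_piAntidiag_with_sum_eq hθ hI hI' k.2]
    exact sum_subtype_eq_sum_filter fun y : ι → ℕ ↦ ∏ j, a (θ j) (y j)
  have weight_nonneg (y : {y : ι → ℕ // ∑ j ∈ I, y j = n}) : 0 ≤ ∏ j, a (θ j) (y.1 j) :=
    prod_nonneg fun j _ ↦ (ha_pos _ (hθ j) _).le
  have regroup := hasSum_comp_mul_iff_hasSum_mul_sum weight_nonneg mem_level
    (c := fun k ↦ p k / a (∑ j, θ j) k) (s := s)
  simp only [sum_level] at regroup
  convert regroup using 3
  · exact mul_div_right_comm ..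
  · ring

end ConvolutionSplitting

/-- marginal sum of a convolution splitting distribution.
For an additive, positive parametric sequence `a`, `J ≥ 2`, `θ ∈ (0,∞)^J`, a pmf `p` on `ℕ`,
and the convolution splitting distribution
`P y = p |y| * (∏ j, a (θ j) (y j)) / a |θ| |y|` on `ℕ^J`, and `I` a nonempty proper subset of
`{1,…,J}`, for every `n` the marginal sum satisfies
`∑_{y : ∑_{j∈I} y j = n} P y = ∑_{k ≥ n} (a |θ_I| n * a |θ_{-I}| (k-n) / a |θ| k) * p k`. -/
theorem marginal_sum_of_convolution_splitting
    (a : ℝ → ℕ → ℝ)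
    (ha_pos : ∀ θ : ℝ, 0 < θ → ∀ y : ℕ, 0 < a θ y)
    (ha_add : ∀ θ θ' : ℝ, 0 < θ → 0 < θ' → ∀ n : ℕ,
      ∑ y ∈ Finset.range (n + 1), a θ y * a θ' (n - y) = a (θ + θ') n)
    (J : ℕ) (hJ : 2 ≤ J) (θ : Fin J → ℝ) (hθ : ∀ j, 0 < θ j)
    (p : ℕ → ℝ) (hp0 : ∀ n, 0 ≤ p n) (hp1 : ∑' n : ℕ, p n = 1)
    (P : (Fin J → ℕ) → ℝ)
    (hP : ∀ y : Fin J → ℕ,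
      P y = p (∑ j, y j) * (∏ j, a (θ j) (y j)) / a (∑ j, θ j) (∑ j, y j))
    (I : Finset (Fin J)) (hI : I.Nonempty) (hI' : I ≠ Finset.univ) :
    ∀ n : ℕ,
      ∑' y : {y : Fin J → ℕ // ∑ j ∈ I, y j = n}, P y.val
        = ∑' k : {k : ℕ // n ≤ k},
            a (∑ j ∈ I, θ j) n * a (∑ j ∈ Iᶜ, θ j) (k.val - n) / a (∑ j, θ j) k.val
              * p k.val := by
  intro n
  obtain rfl : P = convolutionSplitting a θ p := funext hP
  exact tsum_eq_tsum_of_hasSum_iff_hasSum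
    (marginal_sum_of_convolution_splitting_general ha_pos ha_add hθ p hI hI' n)
end

section
/- Let a be an additive and positive parametric sequence, J ≥ 2, θ ∈ (0,∞)^J, p a pmf on ℕ, and let P be the convolution splitting distribution P(y) = p(|y|)·∏_{j=1}^{J} a_{θ_j}(y_j)/a_{|θ|}(|y|) on ℕ^J. Let I be a nonempty proper subset of {1,…,J}. Then for every z : I → ℕ with ∑_{j∈I} z_j = n such that ∑_{y : ∑_{j∈I} y_j = n} P(y) > 0, the conditional distribution of the subvector given its sum is the singular convolution distribution: (∑_{y ∈ ℕ^J : y_j = z_j for all j∈I} P(y)) / (∑_{y ∈ ℕ^J : ∑_{j∈I} y_j = n} P(y)) = ∏_{j∈I} a_{θ_j}(z_j)/a_{|θ_I|}(n), where |θ_I| = ∑_{j∈I} θ_j. -/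
/-!
Write a vector as `y = (u, v)` with `u` its `I`-part and `v` the rest. On the event `|u| = n` the
weight `w |y| * ∏ j, b j (y j)` is a product of a function of `u` alone and a function of `v` alone,
since `|y| = n + |v|`. Hence the sum over `v` is a common factor of the numerator and of the
denominator of the conditional probability, and what remains of the denominator is the sum of
`∏ j ∈ I, b j (u j)` over `|u| = n`. For `b j = a (θ j)` with `a` additive, the generating series
satisfy `A_(θ + θ') = A_θ * A_θ'`, so this sum is the `n`-th coefficient of
`∏ j ∈ I, A_(θ j) = A_(∑ j ∈ I, θ j)`.
-/

open Finset

section AdditiveFamily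

variable {Θ R κ : Type*} [AddCommMonoid Θ] [PartialOrder Θ] [CommSemiring R]

/-- A family of sequences `a θ : ℕ → R` is additive when convolution of sequences corresponds to
addition of positive parameters. The parameters range over an ordered monoid, so that both real
parameters and integer ones (such as `a θ = Nat.choose θ`) are covered. -/
def IsAdditiveFamily (a : Θ → ℕ → R) : Prop :=
  ∀ θ θ' : Θ, 0 < θ → 0 < θ' → ∀ n : ℕ,
    ∑ y ∈ range (n + 1), a θ y * a θ' (n - y) = a (θ + θ') n

namespace IsAdditiveFamily

variable {a : Θ → ℕ → R}

theorem powerSeries_mk_add (ha : IsAdditiveFamily a) {θ θ' : Θ} (hθ : 0 < θ) (hθ' : 0 < θ') :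
    PowerSeries.mk (a (θ + θ')) = PowerSeries.mk (a θ) * PowerSeries.mk (a θ') := by
  ext n
  simp only [PowerSeries.coeff_mul, PowerSeries.coeff_mk]
  rw [Nat.sum_antidiagonal_eq_sum_range_succ fun k l ↦ a θ k * a θ' l, ha θ θ' hθ hθ']

variable [IsOrderedCancelAddMonoid Θ] {θ : κ → Θ}

theorem powerSeries_mk_sum (ha : IsAdditiveFamily a) {s : Finset κ} (hs : s.Nonempty)
    (hθ : ∀ j ∈ s, 0 < θ j) :
    PowerSeries.mk (a (∑ j ∈ s, θ j)) = ∏ j ∈ s, PowerSeries.mk (a (θ j)) := by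
  induction hs using Finset.Nonempty.cons_induction with
  | singleton i => simp only [sum_singleton, prod_singleton]
  | cons i s hi hs ih =>
    rw [forall_mem_cons] at hθ
    rw [sum_cons, prod_cons, ha.powerSeries_mk_add hθ.1 (sum_pos hθ.2 hs), ih hθ.2]

theorem sum_piAntidiag_prod [DecidableEq κ] (ha : IsAdditiveFamily a) {s : Finset κ}
    (hs : s.Nonempty) (hθ : ∀ j ∈ s, 0 < θ j) (n : ℕ) :
    ∑ u ∈ s.piAntidiag n, ∏ j ∈ s, a (θ j) (u j) = a (∑ j ∈ s, θ j) n := by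
  rw [← PowerSeries.coeff_mk n (a (∑ j ∈ s, θ j)), ha.powerSeries_mk_sum hs hθ,
    PowerSeries.coeff_prod]
  simp only [PowerSeries.coeff_mk, finsuppAntidiag, sum_map]
  exact (sum_attach (s.piAntidiag n) fun u ↦ ∏ j ∈ s, a (θ j) (u j)).symm

end IsAdditiveFamily

end AdditiveFamily

section TsumProd

variable {Y U V K : Type*} (e : Y ≃ U × V) {r : Y → Prop} (f : U → K) (g : V → K)

theorem tsum_subtype_fst_eq [DivisionRing K] [TopologicalSpace K] [IsTopologicalRing K]
    [T2Space K] {u : U} (hr : ∀ y, r y ↔ (e y).1 = u) :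
    ∑' y : {y // r y}, f (e y).1 * g (e y).2 = f u * ∑' v, g v := by
  let split : {y // r y} ≃ V :=
    (e.subtypeEquiv (q := fun x ↦ x.1 = u) hr).trans
      ((Equiv.prodSubtypeFstEquivSubtypeProd (p := (· = u))).trans (Equiv.uniqueProd V _))
  rw [← tsum_mul_left, ← split.tsum_eq]
  exact tsum_congr fun y ↦ by rw [(hr y).1 y.2]; rfl

theorem tsum_subtype_fst_mem [NormedDivisionRing K] [CompleteSpace K] {S : Finset U}
    (hr : ∀ y, r y ↔ (e y).1 ∈ S)
    (hsum : Summable fun y : {y // r y} ↦ f (e y).1 * g (e y).2) :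
    ∑' y : {y // r y}, f (e y).1 * g (e y).2 = (∑ u ∈ S, f u) * ∑' v, g v := by
  let split : {y // r y} ≃ S × V :=
    (e.subtypeEquiv hr).trans Equiv.prodSubtypeFstEquivSubtypeProd
  have hprod : Summable fun x : S × V ↦ f x.1 * g x.2 := split.summable_iff.1 hsum
  calc ∑' y : {y // r y}, f (e y).1 * g (e y).2
      = ∑' x : S × V, f x.1 * g x.2 := split.tsum_eq fun x : S × V ↦ f x.1 * g x.2
    _ = ∑' u : S, f u * ∑' v, g v := by simp only [hprod.tsum_prod, tsum_mul_left]
    _ = (∑ u ∈ S, f u) * ∑' v, g v := by rw [tsum_mul_right, S.tsum_subtype]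

end TsumProd

section SplittingWeight

variable {ι M K : Type*} [Fintype ι] [AddCommMonoid M]

/-- The unnormalised splitting distribution with component weights `b j` and total weight `w`.
The convolution splitting distribution is the case `b j = a (θ j)`, `w N = p N / a |θ| N`. -/
def splittingWeight [CommMonoid K] (w : M → K) (b : ι → M → K) (y : ι → M) : K :=
  w (∑ j, y j) * ∏ j, b j (y j)

variable [DecidableEq ι]

/-- The weight that remains for the components outside `I` once those in `I` are known to have
sum `n`. -/
def complementWeight [CommMonoid K] (w : M → K) (b : ι → M → K) (I : Finset ι) (n : M)
    (v : {j // j ∉ I} → M) : K :=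
  w (n + ∑ j, v j) * ∏ j : {j // j ∉ I}, b j (v j)

variable (w : M → K) (b : ι → M → K) (I : Finset ι) {n : M}

theorem splittingWeight_eq_mul_complementWeight [CommMonoid K] {y : ι → M}
    (hy : ∑ j ∈ I, y j = n) :
    splittingWeight w b y =
      (∏ j : I, b j (y j)) * complementWeight w b I n fun j ↦ y j := by
  have hsum : ∑ j, y j = n + ∑ j : {j // j ∉ I}, y j := by
    rw [← sum_add_sum_compl I, hy, sum_subtype Iᶜ fun _ ↦ mem_compl]
  have hprod : ∏ j, b j (y j) = (∏ j : I, b j (y j)) * ∏ j : {j // j ∉ I}, b j (y j) := by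
    rw [← prod_mul_prod_compl I, ← prod_coe_sort I, prod_subtype Iᶜ fun _ ↦ mem_compl]
  rw [splittingWeight, complementWeight, hsum, hprod, mul_left_comm]

theorem tsum_splittingWeight_subvector_eq [Field K] [TopologicalSpace K] [IsTopologicalRing K]
    [T2Space K] {z : ι → M} (hz : ∑ j ∈ I, z j = n) :
    ∑' y : {y : ι → M // ∀ j ∈ I, y j = z j}, splittingWeight w b y =
      (∏ j ∈ I, b j (z j)) * ∑' v, complementWeight w b I n v := by
  have hfactor (y : {y : ι → M // ∀ j ∈ I, y j = z j}) :=
    splittingWeight_eq_mul_complementWeight w b I ((sum_congr rfl y.2).trans hz)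
  rw [tsum_congr hfactor, ← prod_coe_sort I fun j ↦ b j (z j)]
  refine tsum_subtype_fst_eq (Equiv.piEquivPiSubtypeProd (· ∈ I) fun _ ↦ M)
    (fun u ↦ ∏ j : I, b j (u j)) (complementWeight w b I n) (u := fun j ↦ z j) fun y ↦ ?_
  simp [funext_iff]

theorem tsum_splittingWeight_sum_eq [HasAntidiagonal M] [DecidableEq M] [NormedField K]
    [CompleteSpace K]
    (hsum : Summable fun y : {y : ι → M // ∑ j ∈ I, y j = n} ↦ splittingWeight w b y) :
    ∑' y : {y : ι → M // ∑ j ∈ I, y j = n}, splittingWeight w b y =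
      (∑ u ∈ (univ : Finset I).piAntidiag n, ∏ j : I, b j (u j)) *
        ∑' v, complementWeight w b I n v := by
  have hfactor (y : {y : ι → M // ∑ j ∈ I, y j = n}) :=
    splittingWeight_eq_mul_complementWeight w b I y.2
  rw [tsum_congr hfactor]
  refine tsum_subtype_fst_mem (Equiv.piEquivPiSubtypeProd (· ∈ I) fun _ ↦ M)
    (fun u ↦ ∏ j : I, b j (u j)) (complementWeight w b I n) (fun y ↦ ?_) (hsum.congr hfactor)
  simp [← sum_coe_sort I y]

end SplittingWeight

theorem conditional_subvector_given_sum_of_convolution_splitting_general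
    {ι Θ K : Type*} [Fintype ι] [AddCommMonoid Θ] [PartialOrder Θ]
    [IsOrderedCancelAddMonoid Θ] [NormedField K] [CompleteSpace K] {a : Θ → ℕ → K}
    (ha : IsAdditiveFamily a) (w : ℕ → K) {θ : ι → Θ} {I : Finset ι} (hI : I.Nonempty)
    (hθ : ∀ j ∈ I, 0 < θ j) {z : ι → ℕ} {n : ℕ} (hz : ∑ j ∈ I, z j = n)
    (hne : ∑' y : {y : ι → ℕ // ∑ j ∈ I, y j = n}, splittingWeight w (fun j ↦ a (θ j)) y ≠ 0) :
    (∑' y : {y : ι → ℕ // ∀ j ∈ I, y j = z j}, splittingWeight w (fun j ↦ a (θ j)) y)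
        / (∑' y : {y : ι → ℕ // ∑ j ∈ I, y j = n}, splittingWeight w (fun j ↦ a (θ j)) y)
      = (∏ j ∈ I, a (θ j) (z j)) / a (∑ j ∈ I, θ j) n := by
  classical
  have hconv : ∑ u ∈ (univ : Finset I).piAntidiag n, ∏ j : I, a (θ j) (u j) =
      a (∑ j ∈ I, θ j) n := by
    have : Nonempty I := hI.coe_sort
    rw [ha.sum_piAntidiag_prod (θ := fun j : I ↦ θ j) univ_nonempty fun j _ ↦ hθ j j.2,
      sum_coe_sort I θ]
  have hsum : Summable fun y : {y : ι → ℕ // ∑ j ∈ I, y j = n} ↦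
      splittingWeight w (fun j ↦ a (θ j)) y :=
    not_imp_comm.1 tsum_eq_zero_of_not_summable hne
  rw [tsum_splittingWeight_sum_eq w _ I hsum, hconv] at hne ⊢
  rw [tsum_splittingWeight_subvector_eq w _ I hz, mul_div_mul_right _ _ (right_ne_zero_of_mul hne)]

/-- the conditional distribution of a subvector of a convolution splitting
distribution given its sum is the singular convolution distribution.
For an additive, positive parametric sequence `a`, `J ≥ 2`, `θ ∈ (0,∞)^J`, a pmf `p`, the
convolution splitting distribution `P`, a nonempty proper subset `I` and `z : I → ℕ` with
`∑_{j∈I} z j = n` such that the marginal-sum probability is positive,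
`P(Y_I = z | ∑_{j∈I} Y_j = n) = ∏_{j∈I} a (θ j) (z j) / a |θ_I| n`. -/
theorem conditional_subvector_given_sum_of_convolution_splitting
    (a : ℝ → ℕ → ℝ)
    (ha_pos : ∀ θ : ℝ, 0 < θ → ∀ y : ℕ, 0 < a θ y)
    (ha_add : ∀ θ θ' : ℝ, 0 < θ → 0 < θ' → ∀ n : ℕ,
      ∑ y ∈ Finset.range (n + 1), a θ y * a θ' (n - y) = a (θ + θ') n)
    (J : ℕ) (hJ : 2 ≤ J) (θ : Fin J → ℝ) (hθ : ∀ j, 0 < θ j)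
    (p : ℕ → ℝ) (hp0 : ∀ n, 0 ≤ p n) (hp1 : ∑' n : ℕ, p n = 1)
    (P : (Fin J → ℕ) → ℝ)
    (hP : ∀ y : Fin J → ℕ,
      P y = p (∑ j, y j) * (∏ j, a (θ j) (y j)) / a (∑ j, θ j) (∑ j, y j))
    (I : Finset (Fin J)) (hI : I.Nonempty) (hI' : I ≠ Finset.univ)
    (z : Fin J → ℕ) (n : ℕ) (hz : ∑ j ∈ I, z j = n)
    (hpos : 0 < ∑' y : {y : Fin J → ℕ // ∑ j ∈ I, y j = n}, P y.val) :
    (∑' y : {y : Fin J → ℕ // ∀ j ∈ I, y j = z j}, P y.val)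
        / (∑' y : {y : Fin J → ℕ // ∑ j ∈ I, y j = n}, P y.val)
      = (∏ j ∈ I, a (θ j) (z j)) / a (∑ j ∈ I, θ j) n := by
  obtain rfl : P = splittingWeight (fun N ↦ p N / a (∑ j, θ j) N) fun j ↦ a (θ j) :=
    funext fun y ↦ by rw [hP, splittingWeight, mul_div_right_comm]
  exact conditional_subvector_given_sum_of_convolution_splitting_general ha_add _ hI
    (fun j _ ↦ hθ j) hz hpos.ne'
end

section
/- (Dirichlet multinomial splitting beta binomial with a = |α| equals non-singular Dirichlet multinomial.) Let J ≥ 1, n ∈ ℕ, α ∈ (0,∞)^J with |α| = α_1+⋯+α_J, and b > 0. Then for every y ∈ ℕ^J with |y| = y_1+⋯+y_J ≤ n: [(n choose |y|)·B(|α|+|y|, b+n−|y|)/B(|α|, b)]·[(|y|!/(|α|)_{|y|})·∏_{j=1}^{J} (α_j)_{y_j}/y_j!] = [(b)_{n−|y|}/(n−|y|)!]·[∏_{j=1}^{J} (α_j)_{y_j}/y_j!]·[n!/(|α|+b)_n], where B(u,v) = Γ(u)Γ(v)/Γ(u+v) is the Beta function and (x)_k = x(x+1)⋯(x+k−1) is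 the Pochhammer symbol. -/
/-- The Pochhammer symbol `(x)ₖ = x(x+1)⋯(x+k−1)`. -/
noncomputable def poch (x : ℝ) (k : ℕ) : ℝ := ∏ i ∈ Finset.range k, (x + i)

/-- The Beta function `B(u,v) = Γ(u)Γ(v)/Γ(u+v)`. -/
noncomputable def betaFn (u v : ℝ) : ℝ := Real.Gamma u * Real.Gamma v / Real.Gamma (u + v)

/-! Since `Γ(x + k) = (x)ₖ Γ(x)`, every Gamma factor cancels from the ratio of Beta functions in the
beta binomial weight of `k`, which becomes `(a)ₖ (b)ₙ₋ₖ n! / (k! (n-k)! (a+b)ₙ)`. With `a = |α|` and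
`k = |y|`, the Dirichlet multinomial normalisation `|y|! / (|α|)_{|y|}` cancels `(a)ₖ / k!`. -/

lemma ne_neg_natCast_of_pos {x : ℝ} (hx : 0 < x) (m : ℕ) : x ≠ -m :=
  ((neg_nonpos.2 m.cast_nonneg).trans_lt hx).ne'

lemma poch_succ (x : ℝ) (k : ℕ) : poch x (k + 1) = poch x k * (x + k) :=
  Finset.prod_range_succ _ k

lemma poch_ne_zero {x : ℝ} (hx : ∀ m : ℕ, x ≠ -m) (k : ℕ) : poch x k ≠ 0 :=
  Finset.prod_ne_zero_iff.2 fun i _ h => hx i (eq_neg_of_add_eq_zero_left h)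

lemma Gamma_add_natCast {x : ℝ} {k : ℕ} (hx : poch x k ≠ 0) :
    Real.Gamma (x + k) = poch x k * Real.Gamma x := by
  induction k with
  | zero => simp [poch]
  | succ k ih =>
    obtain ⟨hpoch, hxk⟩ := mul_ne_zero_iff.1 (poch_succ x k ▸ hx)
    calc Real.Gamma (x + (k + 1 : ℕ))
        = Real.Gamma (x + k + 1) := by rw [Nat.cast_succ, add_assoc]
      _ = (x + k) * (poch x k * Real.Gamma x) := by rw [Real.Gamma_add_one hxk, ih hpoch]
      _ = poch x (k + 1) * Real.Gamma x := by rw [poch_succ]; ring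

lemma betaFn_ne_zero {u v : ℝ} (hu : ∀ m : ℕ, u ≠ -m) (hv : ∀ m : ℕ, v ≠ -m)
    (huv : ∀ m : ℕ, u + v ≠ -m) : betaFn u v ≠ 0 :=
  div_ne_zero (mul_ne_zero (Real.Gamma_ne_zero hu) (Real.Gamma_ne_zero hv))
    (Real.Gamma_ne_zero huv)

lemma betaFn_add_natCast {u v : ℝ} {k l : ℕ} (hu : poch u k ≠ 0) (hv : poch v l ≠ 0)
    (huv : poch (u + v) (k + l) ≠ 0) :
    betaFn (u + k) (v + l) = poch u k * poch v l / poch (u + v) (k + l) * betaFn u v := by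
  have hsum : u + k + (v + l) = u + v + (k + l : ℕ) := by push_cast; ring
  rw [betaFn, betaFn, hsum, Gamma_add_natCast hu, Gamma_add_natCast hv, Gamma_add_natCast huv,
    mul_mul_mul_comm, mul_div_mul_comm]

lemma choose_mul_betaFn_div_betaFn {a b : ℝ} (ha : ∀ m : ℕ, a ≠ -m) (hb : ∀ m : ℕ, b ≠ -m)
    (hab : ∀ m : ℕ, a + b ≠ -m) {n k : ℕ} (hk : k ≤ n) :
    (n.choose k : ℝ) * betaFn (a + k) (b + (n - k : ℕ)) / betaFn a b
      = poch a k / (Nat.factorial k : ℝ) * (poch b (n - k) / (Nat.factorial (n - k) : ℝ))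
          * ((Nat.factorial n : ℝ) / poch (a + b) n) := by
  have hratio : betaFn (a + k) (b + (n - k : ℕ)) / betaFn a b
      = poch a k * poch b (n - k) / poch (a + b) n := by
    rw [betaFn_add_natCast (poch_ne_zero ha k) (poch_ne_zero hb _) (poch_ne_zero hab _),
      mul_div_cancel_right₀ _ (betaFn_ne_zero ha hb hab), Nat.add_sub_cancel' hk]
  rw [mul_div_assoc, hratio, Nat.cast_choose ℝ hk]
  ring

lemma choose_mul_betaFn_div_betaFn_mul_factorial_div_poch {a b : ℝ} (ha : ∀ m : ℕ, a ≠ -m)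
    (hb : ∀ m : ℕ, b ≠ -m) (hab : ∀ m : ℕ, a + b ≠ -m) {n k : ℕ} (hk : k ≤ n) :
    (n.choose k : ℝ) * betaFn (a + k) (b + (n - k : ℕ)) / betaFn a b
        * ((Nat.factorial k : ℝ) / poch a k)
      = poch b (n - k) / (Nat.factorial (n - k) : ℝ)
          * ((Nat.factorial n : ℝ) / poch (a + b) n) := by
  have hpoch : poch a k ≠ 0 := poch_ne_zero ha k
  have hfactorial : (Nat.factorial k : ℝ) ≠ 0 := Nat.cast_ne_zero.2 k.factorial_ne_zero
  have hcancel : poch a k / (Nat.factorial k : ℝ) * ((Nat.factorial k : ℝ) / poch a k) = 1 := by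
    rw [div_mul_div_cancel₀ hfactorial, div_self hpoch]
  rw [choose_mul_betaFn_div_betaFn ha hb hab hk]
  linear_combination poch b (n - k) / (Nat.factorial (n - k) : ℝ)
    * ((Nat.factorial n : ℝ) / poch (a + b) n) * hcancel

theorem dirichlet_multinomial_splitting_beta_binomial_eq_nonsingular_general
    {ι : Type*} [Fintype ι] {n : ℕ} {α : ι → ℝ} {b : ℝ} {y : ι → ℕ}
    (hα : ∀ m : ℕ, ∑ j, α j ≠ -m) (hb : ∀ m : ℕ, b ≠ -m)
    (hαb : ∀ m : ℕ, (∑ j, α j) + b ≠ -m) (hy : (∑ j, y j) ≤ n) :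
    ((n.choose (∑ j, y j) : ℝ)
          * betaFn ((∑ j, α j) + ((∑ j, y j : ℕ) : ℝ)) (b + ((n - ∑ j, y j : ℕ) : ℝ))
          / betaFn (∑ j, α j) b)
        * ((Nat.factorial (∑ j, y j) : ℝ) / poch (∑ j, α j) (∑ j, y j))
        * ∏ j, poch (α j) (y j) / (Nat.factorial (y j) : ℝ)
      = (poch b (n - ∑ j, y j) / (Nat.factorial (n - ∑ j, y j) : ℝ))
          * (∏ j, poch (α j) (y j) / (Nat.factorial (y j) : ℝ))
          * ((Nat.factorial n : ℝ) / poch ((∑ j, α j) + b) n) := by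
  rw [choose_mul_betaFn_div_betaFn_mul_factorial_div_poch hα hb hαb hy, mul_right_comm]

/-- the Dirichlet multinomial splitting beta binomial distribution with `a = |α|`
equals the non-singular Dirichlet multinomial distribution: for `|y| ≤ n`,
`[C(n,|y|) B(|α|+|y|, b+n−|y|)/B(|α|,b)] * [(|y|!/(|α|)_{|y|}) ∏ⱼ (αⱼ)_{yⱼ}/yⱼ!]
  = [(b)_{n−|y|}/(n−|y|)!] * [∏ⱼ (αⱼ)_{yⱼ}/yⱼ!] * [n!/(|α|+b)ₙ]`. -/
theorem dirichlet_multinomial_splitting_beta_binomial_eq_nonsingular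
    (J : ℕ) (hJ : 1 ≤ J) (n : ℕ) (α : Fin J → ℝ) (hα : ∀ j, 0 < α j)
    (b : ℝ) (hb : 0 < b) (y : Fin J → ℕ) (hy : (∑ j, y j) ≤ n) :
    ((n.choose (∑ j, y j) : ℝ)
          * betaFn ((∑ j, α j) + ((∑ j, y j : ℕ) : ℝ)) (b + ((n - ∑ j, y j : ℕ) : ℝ))
          / betaFn (∑ j, α j) b)
        * ((Nat.factorial (∑ j, y j) : ℝ) / poch (∑ j, α j) (∑ j, y j))
        * ∏ j, poch (α j) (y j) / (Nat.factorial (y j) : ℝ)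
      = (poch b (n - ∑ j, y j) / (Nat.factorial (n - ∑ j, y j) : ℝ))
          * (∏ j, poch (α j) (y j) / (Nat.factorial (y j) : ℝ))
          * ((Nat.factorial n : ℝ) / poch ((∑ j, α j) + b) n) := by
  have hα_sum : 0 < ∑ j, α j :=
    Finset.sum_pos (fun j _ => hα j) ⟨⟨0, hJ⟩, Finset.mem_univ _⟩
  exact dirichlet_multinomial_splitting_beta_binomial_eq_nonsingular_general
    (ne_neg_natCast_of_pos hα_sum) (ne_neg_natCast_of_pos hb)
    (ne_neg_natCast_of_pos (add_pos hα_sum hb)) hy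
end

section
/- (Covariance of a multinomial splitting distribution.) Let J ≥ 1, let p be a pmf on ℕ with finite first and second factorial moments μ₁ = ∑_n n·p(n) < ∞ and μ₂ = ∑_n n(n−1)·p(n) < ∞, let π ∈ (0,1)^J with ∑_j π_j = 1, and let P be the multinomial splitting distribution P(y) = p(|y|)·(|y|!/∏_j y_j!)·∏_j π_j^{y_j} on ℕ^J. Then for all i, j ∈ {1,…,J}, the covariance Cov(Y_i, Y_j) = ∑_y y_i·y_j·P(y) − (∑_y y_i·P(y))·(∑_y y_j·P(y)) equals μ₁·π_i·[i = j] + (μ₂ − μ₁²)·π_i·π_j, where [i = j] is 1 if i = j and 0 otherwise. -/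
/-!
Conditionally on `|Y| = n`, the vector `Y` is multinomial with parameters `n` and `π`. Its moments
come from the multinomial expansion of `(∑ₖ Xₖ) ^ n`: the Euler operator `Xᵢ ∂ᵢ` multiplies the
monomial `∏ₖ Xₖ ^ yₖ` by `yᵢ`, so applying it once or twice and evaluating at `π` yields
`E[Yᵢ | n] = n πᵢ` and `E[Yᵢ Yⱼ | n] = n πᵢ [i = j] + n (n - 1) πᵢ πⱼ`. Averaging over `n` (the law
of total expectation) gives the moments of `Y`.
-/

open Finset

theorem hasSum_tsum_sum_fiber {α β E : Type*} [NormedAddCommGroup E] [CompleteSpace E]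
    {f : α → β} {s : β → Finset α} (hs : ∀ b, f ⁻¹' {b} = s b) {g : α → E}
    (hg : Summable fun b => ∑ a ∈ s b, ‖g a‖) :
    HasSum g (∑' b, ∑ a ∈ s b, g a) := by
  have mem_iff (a : α) (b : β) : a ∈ (s b : Set α) ↔ b = f a := by
    rw [← hs, Set.mem_preimage, Set.mem_singleton_iff, eq_comm]
  have hsum : Summable g := by
    have existsUnique_mem (a : α) : ∃! b, a ∈ (s b : Set α) :=
      ⟨f a, (mem_iff a _).2 rfl, fun b => (mem_iff a b).1⟩
    refine .of_norm ((summable_partition (fun a => norm_nonneg (g a)) existsUnique_mem).2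
      ⟨fun b => (s b).summable (‖g ·‖), ?_⟩)
    exact hg.congr fun b => ((s b).tsum_subtype' (‖g ·‖)).symm
  have tsum_fiber (b : β) : ∑' a : f ⁻¹' {b}, g a = ∑ a ∈ s b, g a := by
    rw [hs, (s b).tsum_subtype']
  have htsum := (hsum.hasSum.tsum_fiberwise f).tsum_eq
  simp only [tsum_fiber] at htsum
  exact htsum ▸ hsum.hasSum

section Multinomial

open MvPolynomial (C X eval monomial pderiv)

variable {ι R : Type*} [Fintype ι] [CommSemiring R]

theorem X_mul_pderiv_prod_X_pow (y : ι → ℕ) (i : ι) :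
    X i * pderiv i (∏ k, X k ^ y k : MvPolynomial ι R) =
      (y i : MvPolynomial ι R) * ∏ k, X k ^ y k := by
  have prod_eq : (∏ k, X k ^ y k : MvPolynomial ι R) =
      monomial (Finsupp.equivFunOnFinite.symm y) 1 := by
    simp [MvPolynomial.monomial_eq, Finsupp.prod_fintype]
  rw [prod_eq, MvPolynomial.X_mul_pderiv_monomial, nsmul_eq_mul,
    Finsupp.equivFunOnFinite_symm_apply_apply]

theorem pderiv_sum_X_pow (n : ℕ) (i : ι) :
    pderiv i ((∑ k, X k : MvPolynomial ι R) ^ n) =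
      (n : MvPolynomial ι R) * (∑ k, X k) ^ (n - 1) := by
  classical
  simp [Derivation.leibniz_pow, MvPolynomial.pderiv_X, Pi.single_apply]

/-- The term indexed by `y` in the multinomial expansion of `(∑ k, x k) ^ (∑ k, y k)`. When `x` is a
probability vector this is the multinomial probability of the vector of counts `y`. -/
def multinomialWeight (x : ι → R) (y : ι → ℕ) : R :=
  Nat.multinomial univ y * ∏ k, x k ^ y k

theorem multinomialWeight_nonneg [PartialOrder R] [IsOrderedRing R] {x : ι → R}
    (hx : ∀ k, 0 ≤ x k) (y : ι → ℕ) : 0 ≤ multinomialWeight x y :=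
  mul_nonneg (Nat.cast_nonneg _) (prod_nonneg fun k _ => pow_nonneg (hx k) _)

theorem multinomialWeight_eq_factorial_div {K : Type*} [Semifield K] [CharZero K] (x : ι → K)
    (y : ι → ℕ) :
    multinomialWeight x y =
      ((∑ k, y k).factorial : K) / (∏ k, ((y k).factorial : K)) * ∏ k, x k ^ y k := by
  rw [multinomialWeight, Nat.multinomial,
    Nat.cast_div_charZero (Nat.prod_factorial_dvd_factorial_sum _ _), Nat.cast_prod]

variable [DecidableEq ι]

/-- The expectation of `h` under the multinomial distribution with `n` trials and cell
probabilities `x`. The weights `x` are neither normalized nor required to be real, so that `x` may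
also be the vector of indeterminates of a polynomial ring. -/
def multinomialExpect (x : ι → R) (n : ℕ) (h : (ι → ℕ) → R) : R :=
  ∑ y ∈ piAntidiag univ n, multinomialWeight x y * h y

theorem multinomialExpect_one (x : ι → R) (n : ℕ) :
    multinomialExpect x n (fun _ => 1) = (∑ k, x k) ^ n := by
  simp only [multinomialExpect, multinomialWeight, mul_one, sum_pow_eq_sum_piAntidiag]

theorem X_mul_pderiv_multinomialExpect (n : ℕ) (h : (ι → ℕ) → ℕ) (i : ι) :
    X i * pderiv i (multinomialExpect X n fun y => (h y : MvPolynomial ι R)) =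
      multinomialExpect X n fun y => ((h y * y i : ℕ) : MvPolynomial ι R) := by
  simp only [multinomialExpect, multinomialWeight, map_sum, mul_sum]
  refine sum_congr rfl fun y _ => ?_
  simp only [Derivation.leibniz, Derivation.map_natCast, smul_eq_mul, mul_zero, zero_add, add_zero]
  calc
    _ = (Nat.multinomial univ y * h y : MvPolynomial ι R) *
        (X i * pderiv i (∏ k, X k ^ y k)) := by ring
    _ = _ := by rw [X_mul_pderiv_prod_X_pow, Nat.cast_mul]; ring

theorem eval_multinomialExpect_X (x : ι → R) (n : ℕ) (h : (ι → ℕ) → ℕ) :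
    eval x (multinomialExpect X n fun y => (h y : MvPolynomial ι R)) =
      multinomialExpect x n fun y => (h y : R) := by
  simp [multinomialExpect, multinomialWeight]

theorem multinomialExpect_mul_apply (x : ι → R) (n : ℕ) (h : (ι → ℕ) → ℕ) (i : ι) :
    multinomialExpect x n (fun y => ((h y * y i : ℕ) : R)) =
      eval x (X i * pderiv i (multinomialExpect X n fun y => (h y : MvPolynomial ι R))) := by
  rw [X_mul_pderiv_multinomialExpect, eval_multinomialExpect_X]

theorem multinomialExpect_apply (x : ι → R) (n : ℕ) (i : ι) :
    multinomialExpect x n (fun y => (y i : R)) = n * (∑ k, x k) ^ (n - 1) * x i := by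
  have euler := multinomialExpect_mul_apply x n (fun _ => 1) i
  simp only [one_mul, Nat.cast_one, multinomialExpect_one] at euler
  rw [euler, pderiv_sum_X_pow]
  simp [mul_comm]

theorem multinomialExpect_apply_mul_apply (x : ι → R) (n : ℕ) (i j : ι) :
    multinomialExpect x n (fun y => (y i * y j : R)) =
      n * (∑ k, x k) ^ (n - 1) * (x i * if i = j then 1 else 0) +
        n.descFactorial 2 * (∑ k, x k) ^ (n - 2) * (x i * x j) := by
  have euler := multinomialExpect_mul_apply x n (fun y => y i) j
  simp only [Nat.cast_mul, multinomialExpect_apply] at euler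
  have pderiv_eq : pderiv j ((n : MvPolynomial ι R) * (∑ k, X k) ^ (n - 1) * X i) =
      (n : MvPolynomial ι R) * (∑ k, X k) ^ (n - 1) * C (if i = j then 1 else 0) +
        (n.descFactorial 2 : MvPolynomial ι R) * (∑ k, X k) ^ (n - 2) * X i := by
    simp only [Derivation.leibniz, Derivation.map_natCast, pderiv_sum_X_pow, MvPolynomial.pderiv_X,
      Pi.single_apply, smul_eq_mul, Nat.descFactorial, Nat.sub_sub, Nat.sub_zero, mul_one,
      Nat.cast_mul, apply_ite C, map_one, map_zero]
    ring
  have apply_mul_ite : x j * (if i = j then 1 else 0) = x i * if i = j then 1 else 0 := by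
    split_ifs with hij <;> simp [hij]
  rw [euler, pderiv_eq]
  simp only [map_add, map_mul, map_pow, map_sum, map_natCast, MvPolynomial.eval_X,
    MvPolynomial.eval_C]
  rw [← apply_mul_ite]
  ring

end Multinomial

section Splitting

variable {ι : Type*} [Fintype ι] {p : ℕ → ℝ} {π : ι → ℝ}

/-- The multinomial splitting distribution: the total `∑ k, y k` has law `p`, and given its total
the vector `y` is multinomial with cell probabilities `π`. Here `p` may be any real sequence. -/
def multinomialSplitting (p : ℕ → ℝ) (π : ι → ℝ) (y : ι → ℕ) : ℝ :=
  p (∑ k, y k) * multinomialWeight π y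

theorem abs_multinomialSplitting (hπ : ∀ k, 0 ≤ π k) (y : ι → ℕ) :
    |multinomialSplitting p π y| = multinomialSplitting (fun n => |p n|) π y := by
  rw [multinomialSplitting, abs_mul, abs_of_nonneg (multinomialWeight_nonneg hπ y),
    multinomialSplitting]

theorem sum_piAntidiag_mul_multinomialSplitting [DecidableEq ι] (p : ℕ → ℝ) (π : ι → ℝ)
    (n : ℕ) (h : (ι → ℕ) → ℝ) :
    ∑ y ∈ piAntidiag univ n, h y * multinomialSplitting p π y = multinomialExpect π n h * p n := by
  rw [multinomialExpect, sum_mul]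
  refine sum_congr rfl fun y hy => ?_
  rw [multinomialSplitting, (mem_piAntidiag.1 hy).1]
  ring

theorem hasSum_mul_multinomialSplitting [DecidableEq ι] (hπ : ∀ k, 0 ≤ π k)
    {h : (ι → ℕ) → ℝ}
    (hh : Summable fun n => multinomialExpect π n (fun y => |h y|) * p n) :
    HasSum (fun y => h y * multinomialSplitting p π y) (∑' n, multinomialExpect π n h * p n) := by
  have expect_nonneg (n : ℕ) : 0 ≤ multinomialExpect π n (fun y => |h y|) :=
    sum_nonneg fun y _ => mul_nonneg (multinomialWeight_nonneg hπ y) (abs_nonneg _)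
  simp only [← sum_piAntidiag_mul_multinomialSplitting]
  refine hasSum_tsum_sum_fiber (f := fun y : ι → ℕ => ∑ k, y k) (fun n => ?_)
    (hh.abs.congr fun n => ?_)
  · ext y
    simp
  · simp only [Real.norm_eq_abs, abs_mul, abs_multinomialSplitting hπ,
      sum_piAntidiag_mul_multinomialSplitting, abs_of_nonneg (expect_nonneg n)]

theorem hasSum_apply_mul_multinomialSplitting (hmean : Summable fun n : ℕ => (n : ℝ) * p n)
    (hπ : ∀ k, 0 ≤ π k) (hπs : ∑ k, π k = 1) (i : ι) :
    HasSum (fun y : ι → ℕ => (y i : ℝ) * multinomialSplitting p π y)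
      ((∑' n : ℕ, (n : ℝ) * p n) * π i) := by
  classical
  have expect_mul_eq (n : ℕ) :
      multinomialExpect π n (fun y => (y i : ℝ)) * p n = n * p n * π i := by
    rw [multinomialExpect_apply, hπs, one_pow, mul_one, mul_right_comm]
  have hasSum_expect := hmean.hasSum.mul_right (π i)
  simp only [← expect_mul_eq] at hasSum_expect
  rw [← hasSum_expect.tsum_eq]
  apply hasSum_mul_multinomialSplitting hπ
  simpa only [Nat.abs_cast] using hasSum_expect.summable

theorem hasSum_apply_mul_apply_mul_multinomialSplitting [DecidableEq ι]
    (hmean : Summable fun n : ℕ => (n : ℝ) * p n)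
    (hmean2 : Summable fun n : ℕ => (n : ℝ) * ((n : ℝ) - 1) * p n)
    (hπ : ∀ k, 0 ≤ π k) (hπs : ∑ k, π k = 1) (i j : ι) :
    HasSum (fun y : ι → ℕ => (y i : ℝ) * (y j : ℝ) * multinomialSplitting p π y)
      ((∑' n : ℕ, (n : ℝ) * p n) * (π i * if i = j then 1 else 0) +
        (∑' n : ℕ, (n : ℝ) * ((n : ℝ) - 1) * p n) * (π i * π j)) := by
  have expect_mul_eq (n : ℕ) :
      multinomialExpect π n (fun y => (y i * y j : ℝ)) * p n =
        n * p n * (π i * if i = j then 1 else 0) + n * (n - 1) * p n * (π i * π j) := by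
    rw [multinomialExpect_apply_mul_apply, hπs, one_pow, one_pow, Nat.cast_descFactorial_two]
    ring
  have hasSum_expect := (hmean.hasSum.mul_right (π i * if i = j then 1 else 0)).add
    (hmean2.hasSum.mul_right (π i * π j))
  simp only [← expect_mul_eq] at hasSum_expect
  rw [← hasSum_expect.tsum_eq]
  apply hasSum_mul_multinomialSplitting hπ
  simpa only [abs_mul, Nat.abs_cast] using hasSum_expect.summable

theorem covariance_multinomial_splitting_general [DecidableEq ι]
    (hmean : Summable fun n : ℕ => (n : ℝ) * p n)
    (hmean2 : Summable fun n : ℕ => (n : ℝ) * ((n : ℝ) - 1) * p n)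
    (hπ : ∀ k, 0 ≤ π k) (hπs : ∑ k, π k = 1) (i j : ι) :
    (∑' y : ι → ℕ, (y i : ℝ) * (y j : ℝ) * multinomialSplitting p π y)
        - (∑' y : ι → ℕ, (y i : ℝ) * multinomialSplitting p π y)
          * (∑' y : ι → ℕ, (y j : ℝ) * multinomialSplitting p π y)
      = (∑' n : ℕ, (n : ℝ) * p n) * π i * (if i = j then 1 else 0)
          + ((∑' n : ℕ, (n : ℝ) * ((n : ℝ) - 1) * p n)
              - (∑' n : ℕ, (n : ℝ) * p n) ^ 2) * π i * π j := by
  rw [(hasSum_apply_mul_apply_mul_multinomialSplitting hmean hmean2 hπ hπs i j).tsum_eq,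
    (hasSum_apply_mul_multinomialSplitting hmean hπ hπs i).tsum_eq,
    (hasSum_apply_mul_multinomialSplitting hmean hπ hπs j).tsum_eq]
  ring

end Splitting

/-- covariance of a multinomial splitting distribution. With `p` a pmf on `ℕ`
with finite first and second factorial moments `μ₁ = ∑ n·p n` and `μ₂ = ∑ n(n−1)·p n`, and `P`
the multinomial splitting distribution, for all `i, j`,
`Cov(Yᵢ,Yⱼ) = μ₁·πᵢ·[i=j] + (μ₂ − μ₁²)·πᵢ·πⱼ`. -/
theorem covariance_multinomial_splitting
    (J : ℕ) (hJ : 1 ≤ J)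
    (p : ℕ → ℝ) (hp0 : ∀ n, 0 ≤ p n) (hp1 : ∑' n : ℕ, p n = 1)
    (hmean : Summable (fun n : ℕ => (n : ℝ) * p n))
    (hmean2 : Summable (fun n : ℕ => (n : ℝ) * ((n : ℝ) - 1) * p n))
    (π : Fin J → ℝ) (hπ : ∀ j, π j ∈ Set.Ioo (0 : ℝ) 1) (hπs : ∑ j, π j = 1)
    (P : (Fin J → ℕ) → ℝ)
    (hP : ∀ y : Fin J → ℕ,
      P y = p (∑ j, y j)
        * ((Nat.factorial (∑ j, y j) : ℝ) / ∏ j, (Nat.factorial (y j) : ℝ))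
        * ∏ j, π j ^ y j) :
    ∀ i j : Fin J,
      (∑' y : Fin J → ℕ, (y i : ℝ) * (y j : ℝ) * P y)
          - (∑' y : Fin J → ℕ, (y i : ℝ) * P y) * (∑' y : Fin J → ℕ, (y j : ℝ) * P y)
        = (∑' n : ℕ, (n : ℝ) * p n) * π i * (if i = j then 1 else 0)
            + ((∑' n : ℕ, (n : ℝ) * ((n : ℝ) - 1) * p n)
                - (∑' n : ℕ, (n : ℝ) * p n) ^ 2) * π i * π j := by
  obtain rfl : P = multinomialSplitting p π := funext fun y => by
    rw [hP, multinomialSplitting, multinomialWeight_eq_factorial_div, mul_assoc]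
  exact covariance_multinomial_splitting_general hmean hmean2 (fun k => (hπ k).1.le) hπs
end

section
/- (Covariance of a Dirichlet multinomial splitting distribution.) Let J ≥ 1, let p be a pmf on ℕ with finite first and second factorial moments μ₁ = ∑_n n·p(n) < ∞ and μ₂ = ∑_n n(n−1)·p(n) < ∞, let α ∈ (0,∞)^J, and let P be the Dirichlet multinomial splitting distribution P(y) = p(|y|)·(|y|!/(|α|)_{|y|})·∏_j (α_j)_{y_j}/y_j! on ℕ^J. Then for all i, j ∈ {1,…,J}, the covariance Cov(Y_i, Y_j) = ∑_y y_i·y_j·P(y) − (∑_y y_i·P(y))·(∑_y y_j·P(y)) equals (1/(|α|·(|α|+1)))·[ ((|α|+1)·μ₁ + μ₂)·α_i·[i = j] + (μ₂ − ((|α|+1)/|α|)·μ₁²)·α_i·α_j ], where [i = j] is 1 if i = j and 0 otherwise. -/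
/-!
Conditionally on `|Y| = n`, the vector `Y` is Dirichlet multinomial, so it suffices to know the
moments of that law and to average them against `p`. Multiplying the Dirichlet multinomial weight
of parameter `α` by `αᵢ + yᵢ` gives, up to a factor depending only on `|y|`, the weight of parameter
`α + eᵢ`. Since the weights of either parameter sum to one over `|y| = n` (Vandermonde's identity),
this yields the mean; applied once more, with the mean for `α + eᵢ` as input, it yields the second
moments.
-/

open Finset

section Pochhammer

theorem poch_nonneg {x : ℝ} (hx : 0 ≤ x) (k : ℕ) : 0 ≤ poch x k :=
  prod_nonneg fun _ _ => by positivity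

theorem poch_pos {x : ℝ} (hx : 0 < x) (k : ℕ) : 0 < poch x k :=
  prod_pos fun _ _ => by positivity

theorem mul_poch_add_one (x : ℝ) (k : ℕ) : x * poch (x + 1) k = (x + k) * poch x k := by
  calc x * poch (x + 1) k
      = poch x (k + 1) := by
        simp only [poch, prod_range_succ', Nat.cast_add, Nat.cast_one, Nat.cast_zero, add_zero,
          add_assoc, add_comm (1 : ℝ), mul_comm x]
    _ = (x + k) * poch x k := by simp only [poch, prod_range_succ, mul_comm]

theorem ascPochhammer_eval_eq_poch (x : ℝ) (k : ℕ) : (ascPochhammer ℝ k).eval x = poch x k := by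
  induction k with
  | zero => simp [poch]
  | succ k ih => rw [ascPochhammer_succ_eval, ih, poch, poch, prod_range_succ]

theorem poch_div_factorial (x : ℝ) (k : ℕ) : poch x k / k.factorial = Ring.multichoose x k := by
  rw [div_eq_iff (by positivity), ← ascPochhammer_eval_eq_poch,
    ← Polynomial.ascPochhammer_smeval_eq_eval,
    ← Ring.factorial_nsmul_multichoose_eq_ascPochhammer, nsmul_eq_mul, mul_comm]

end Pochhammer

section Vandermonde

theorem coeff_prod_eq_sum_piAntidiag {ι R : Type*} [Fintype ι] [DecidableEq ι] [CommSemiring R]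
    (f : ι → PowerSeries R) (n : ℕ) :
    PowerSeries.coeff n (∏ j, f j)
      = ∑ y ∈ piAntidiag univ n, ∏ j, PowerSeries.coeff (y j) (f j) := by
  rw [PowerSeries.coeff_prod]
  exact sum_equiv Finsupp.equivFunOnFinite (by simp) (by simp)

variable {ι R : Type*} [CommRing R] [BinomialRing R]

theorem binomialSeries_sum (s : Finset ι) (r : ι → R) :
    PowerSeries.binomialSeries R (∑ j ∈ s, r j)
      = ∏ j ∈ s, PowerSeries.binomialSeries R (r j) := by
  induction s using Finset.cons_induction with
  | empty => simp
  | cons i s hi ih => rw [sum_cons, prod_cons, PowerSeries.binomialSeries_add, ih]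

theorem multichoose_eq_neg_one_pow_mul_choose_neg (r : R) (n : ℕ) :
    Ring.multichoose r n = (-1) ^ n * Ring.choose (-r) n := by
  rw [Ring.choose_neg', Units.smul_def, zsmul_eq_mul, Int.cast_negOnePow_natCast, ← mul_assoc,
    ← mul_pow, neg_one_mul, neg_neg, one_pow, one_mul]

variable [Fintype ι] [DecidableEq ι]

theorem sum_piAntidiag_prod_choose (r : ι → R) (n : ℕ) :
    ∑ y ∈ piAntidiag univ n, ∏ j, Ring.choose (r j) (y j) = Ring.choose (∑ j, r j) n := by
  simpa [coeff_prod_eq_sum_piAntidiag] using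
    (congrArg (PowerSeries.coeff n) (binomialSeries_sum univ r)).symm

theorem sum_piAntidiag_prod_multichoose (r : ι → R) (n : ℕ) :
    ∑ y ∈ piAntidiag univ n, ∏ j, Ring.multichoose (r j) (y j)
      = Ring.multichoose (∑ j, r j) n := by
  simp only [multichoose_eq_neg_one_pow_mul_choose_neg, prod_mul_distrib, prod_pow_eq_pow_sum,
    ← sum_neg_distrib, ← sum_piAntidiag_prod_choose, mul_sum]
  refine sum_congr rfl fun y hy => ?_
  rw [(mem_piAntidiag.mp hy).1]

theorem sum_piAntidiag_prod_poch_div_factorial (α : ι → ℝ) (n : ℕ) :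
    ∑ y ∈ piAntidiag univ n, ∏ j, poch (α j) (y j) / (y j).factorial
      = poch (∑ j, α j) n / n.factorial := by
  simp only [poch_div_factorial, sum_piAntidiag_prod_multichoose]

end Vandermonde

theorem hasSum_comp_mul_of_summable_mul_sum_fiber {β γ : Type*} {g : β → γ} {s : γ → Finset β}
    (hs : ∀ b c, b ∈ s c ↔ g b = c) {p : γ → ℝ} {w : β → ℝ} (hw : ∀ b, 0 ≤ w b)
    (hp : Summable fun c => p c * ∑ b ∈ s c, w b) :
    HasSum (fun b => p (g b) * w b) (∑' c, p c * ∑ b ∈ s c, w b) := by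
  have fiber_eq (c : γ) : g ⁻¹' {c} = s c := by ext b; simp [hs]
  have tsum_fiber (q : γ → ℝ) (c : γ) :
      ∑' b : g ⁻¹' {c}, q (g b) * w b = q c * ∑ b ∈ s c, w b := by
    rw [fiber_eq, Finset.tsum_subtype' (s c) fun b => q (g b) * w b, mul_sum]
    exact sum_congr rfl fun b hb => by rw [(hs b c).mp hb]
  have summable_abs : Summable fun b => |p (g b)| * w b := by
    refine (summable_partition (fun b => mul_nonneg (abs_nonneg _) (hw b))
      (s := fun c => g ⁻¹' {c}) fun b => ⟨g b, rfl, fun c hc => hc.symm⟩).mpr ⟨fun c => ?_, ?_⟩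
    · rw [fiber_eq]
      exact (s c).summable fun b => |p (g b)| * w b
    · simp only [tsum_fiber fun c => |p c|]
      simpa only [abs_mul, abs_of_nonneg (sum_nonneg fun b _ => hw b)] using hp.abs
  have summable : Summable fun b => p (g b) * w b :=
    .of_norm (by simpa [abs_mul, abs_of_nonneg (hw _)] using summable_abs)
  have fiberwise := summable.hasSum.tsum_fiberwise g
  simp only [tsum_fiber] at fiberwise
  exact fiberwise.tsum_eq ▸ summable.hasSum

section DirichletMultinomial

variable {ι : Type*} [Fintype ι]

/-- The Dirichlet multinomial weight of `y`, that is, the probability of `y` under the Dirichlet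
multinomial law of parameter `α` and size `|y|`. The size is read off from `y`, so a law of size `n`
is obtained by restricting to `piAntidiag univ n`. -/
noncomputable def dirichletMultinomial (α : ι → ℝ) (y : ι → ℕ) : ℝ :=
  (∑ j, y j).factorial / poch (∑ j, α j) (∑ j, y j)
    * ∏ j, poch (α j) (y j) / (y j).factorial

theorem dirichletMultinomial_nonneg {α : ι → ℝ} (hα : ∀ j, 0 ≤ α j) (y : ι → ℕ) :
    0 ≤ dirichletMultinomial α y :=
  mul_nonneg (div_nonneg (by positivity) (poch_nonneg (sum_nonneg fun j _ => hα j) _))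
    (prod_nonneg fun j _ => div_nonneg (poch_nonneg (hα j) _) (by positivity))

variable [DecidableEq ι]

theorem sum_add_single_one {M : Type*} [AddCommMonoidWithOne M] (α : ι → M) (i : ι) :
    ∑ j, (α + Pi.single i 1 : ι → M) j = ∑ j, α j + 1 := by
  simp [sum_add_distrib]

theorem add_mul_prod_poch (α : ι → ℝ) (y : ι → ℕ) (i : ι) :
    (α i + y i) * ∏ j, poch (α j) (y j)
      = α i * ∏ j, poch ((α + Pi.single i 1 : ι → ℝ) j) (y j) := by
  have off_diagonal : ∏ j ∈ univ.erase i, poch ((α + Pi.single i 1 : ι → ℝ) j) (y j)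
      = ∏ j ∈ univ.erase i, poch (α j) (y j) :=
    prod_congr rfl fun j hj => by simp [ne_of_mem_erase hj]
  rw [← mul_prod_erase univ _ (mem_univ i), ← mul_prod_erase univ (fun j => poch _ (y j))
    (mem_univ i), off_diagonal, ← mul_assoc, ← mul_assoc, Pi.add_apply, Pi.single_eq_same,
    mul_poch_add_one]

variable {α : ι → ℝ}

theorem add_mul_dirichletMultinomial (hα : 0 < ∑ j, α j) (y : ι → ℕ) (i : ι) :
    (α i + y i) * dirichletMultinomial α y
      = α i * (∑ j, α j + (∑ j, y j : ℕ)) / (∑ j, α j)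
        * dirichletMultinomial (α + Pi.single i 1) y := by
  simp only [dirichletMultinomial, prod_div_distrib, sum_add_single_one]
  have total_shift := mul_poch_add_one (∑ j, α j) (∑ j, y j)
  have coord_shift := add_mul_prod_poch α y i
  have := poch_pos hα (∑ j, y j)
  have := poch_pos (add_pos hα one_pos) (∑ j, y j)
  field_simp
  linear_combination (∑ j, α j) * poch (∑ j, α j + 1) (∑ j, y j) * coord_shift
    + α i * (∏ j, poch ((α + Pi.single i 1 : ι → ℝ) j) (y j)) * total_shift

theorem sum_piAntidiag_dirichletMultinomial (hα : 0 < ∑ j, α j) (n : ℕ) :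
    ∑ y ∈ piAntidiag univ n, dirichletMultinomial α y = 1 := by
  have := poch_pos hα n
  calc ∑ y ∈ piAntidiag univ n, dirichletMultinomial α y
      = n.factorial / poch (∑ j, α j) n
          * ∑ y ∈ piAntidiag univ n, ∏ j, poch (α j) (y j) / (y j).factorial := by
        rw [mul_sum]
        refine sum_congr rfl fun y hy => ?_
        rw [dirichletMultinomial, (mem_piAntidiag.mp hy).1]
    _ = 1 := by
        rw [sum_piAntidiag_prod_poch_div_factorial]
        field_simp

theorem sum_piAntidiag_mul_add_mul_dirichletMultinomial (hα : 0 < ∑ j, α j)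
    (f : (ι → ℕ) → ℝ) (i : ι) (n : ℕ) :
    ∑ y ∈ piAntidiag univ n, f y * ((α i + y i) * dirichletMultinomial α y)
      = α i * (∑ j, α j + n) / (∑ j, α j)
        * ∑ y ∈ piAntidiag univ n, f y * dirichletMultinomial (α + Pi.single i 1) y := by
  rw [mul_sum]
  refine sum_congr rfl fun y hy => ?_
  rw [add_mul_dirichletMultinomial hα, (mem_piAntidiag.mp hy).1, mul_left_comm]

theorem sum_piAntidiag_apply_mul_dirichletMultinomial (hα : 0 < ∑ j, α j) (i : ι) (n : ℕ) :
    ∑ y ∈ piAntidiag univ n, y i * dirichletMultinomial α y = n * (α i / ∑ j, α j) := by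
  have tilt := sum_piAntidiag_mul_add_mul_dirichletMultinomial hα 1 i n
  have hα' : 0 < ∑ j, (α + Pi.single i 1 : ι → ℝ) j := by rw [sum_add_single_one]; positivity
  simp only [Pi.one_apply, one_mul, add_mul, sum_add_distrib, ← mul_sum,
    sum_piAntidiag_dirichletMultinomial hα, sum_piAntidiag_dirichletMultinomial hα',
    mul_one] at tilt
  rw [eq_sub_of_add_eq' tilt]
  field_simp
  ring

theorem sum_piAntidiag_apply_mul_apply_mul_dirichletMultinomial (hα : 0 < ∑ k, α k)
    (i j : ι) (n : ℕ) :
    ∑ y ∈ piAntidiag univ n, (y i * y j : ℝ) * dirichletMultinomial α y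
      = n * (n - 1) * (α i * (α j + if i = j then 1 else 0) / ((∑ k, α k) * (∑ k, α k + 1)))
        + n * (α i * (if i = j then 1 else 0) / ∑ k, α k) := by
  have tilt := sum_piAntidiag_mul_add_mul_dirichletMultinomial hα (fun y => (y j : ℝ)) i n
  have hα' : 0 < ∑ k, (α + Pi.single i 1 : ι → ℝ) k := by rw [sum_add_single_one]; positivity
  have expand : ∑ y ∈ piAntidiag univ n, (y j : ℝ) * ((α i + y i) * dirichletMultinomial α y)
      = α i * ∑ y ∈ piAntidiag univ n, y j * dirichletMultinomial α y
        + ∑ y ∈ piAntidiag univ n, (y i * y j : ℝ) * dirichletMultinomial α y := by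
    rw [mul_sum, ← sum_add_distrib]
    exact sum_congr rfl fun y _ => by ring
  rw [expand, sum_piAntidiag_apply_mul_dirichletMultinomial hα,
    sum_piAntidiag_apply_mul_dirichletMultinomial hα', sum_add_single_one, Pi.add_apply,
    Pi.single_apply] at tilt
  simp only [eq_comm (a := j)] at tilt
  rw [eq_sub_of_add_eq' tilt]
  field_simp
  ring

end DirichletMultinomial

section Splitting

variable {ι : Type*} [Fintype ι]

/-- The Dirichlet multinomial splitting distribution: a total `|y|` of law `p` is distributed among
the coordinates by the Dirichlet multinomial law of parameter `α`. The weight `p` is allowed to be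
signed and of any total mass. -/
noncomputable def dirichletMultinomialSplitting (p : ℕ → ℝ) (α : ι → ℝ) (y : ι → ℕ) : ℝ :=
  p (∑ j, y j) * dirichletMultinomial α y

variable {p : ℕ → ℝ} {α : ι → ℝ}

theorem hasSum_mul_dirichletMultinomialSplitting [DecidableEq ι] (hα : ∀ j, 0 ≤ α j)
    {f : (ι → ℕ) → ℝ} (hf : ∀ y, 0 ≤ f y) {m : ℕ → ℝ}
    (hm : ∀ n, ∑ y ∈ piAntidiag univ n, f y * dirichletMultinomial α y = m n)
    (hs : Summable fun n => p n * m n) :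
    HasSum (fun y => f y * dirichletMultinomialSplitting p α y) (∑' n, p n * m n) := by
  simp only [← hm] at hs ⊢
  simpa only [dirichletMultinomialSplitting, mul_left_comm] using
    hasSum_comp_mul_of_summable_mul_sum_fiber (g := fun y : ι → ℕ => ∑ j, y j) (by simp)
      (fun y => mul_nonneg (hf y) (dirichletMultinomial_nonneg hα y)) hs

theorem hasSum_apply_mul_dirichletMultinomialSplitting
    (hmean : Summable fun n : ℕ => (n : ℝ) * p n)
    (hα : ∀ j, 0 ≤ α j) (hA : 0 < ∑ j, α j) (i : ι) :
    HasSum (fun y : ι → ℕ => y i * dirichletMultinomialSplitting p α y)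
      ((∑' n : ℕ, (n : ℝ) * p n) * (α i / ∑ j, α j)) := by
  classical
  have conditional_mean (n : ℕ) :
      (n : ℝ) * p n * (α i / ∑ j, α j) = p n * (n * (α i / ∑ j, α j)) := by ring
  have summable := hmean.mul_right (α i / ∑ j, α j)
  rw [← tsum_mul_right]
  simp only [conditional_mean] at summable ⊢
  exact hasSum_mul_dirichletMultinomialSplitting hα (fun y => by positivity)
    (sum_piAntidiag_apply_mul_dirichletMultinomial hA i) summable

theorem hasSum_apply_mul_apply_mul_dirichletMultinomialSplitting [DecidableEq ι]
    (hmean : Summable fun n : ℕ => (n : ℝ) * p n)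
    (hmean2 : Summable fun n : ℕ => (n : ℝ) * ((n : ℝ) - 1) * p n)
    (hα : ∀ j, 0 ≤ α j) (hA : 0 < ∑ j, α j) (i j : ι) :
    HasSum (fun y : ι → ℕ => (y i : ℝ) * y j * dirichletMultinomialSplitting p α y)
      ((∑' n : ℕ, (n : ℝ) * ((n : ℝ) - 1) * p n)
          * (α i * (α j + if i = j then 1 else 0) / ((∑ k, α k) * (∑ k, α k + 1)))
        + (∑' n : ℕ, (n : ℝ) * p n) * (α i * (if i = j then 1 else 0) / ∑ k, α k)) := by
  set c₂ := α i * (α j + if i = j then 1 else 0) / ((∑ k, α k) * (∑ k, α k + 1))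
  set c₁ := α i * (if i = j then 1 else 0) / ∑ k, α k
  have conditional_moment (n : ℕ) :
      (n : ℝ) * (n - 1) * p n * c₂ + n * p n * c₁ = p n * (n * (n - 1) * c₂ + n * c₁) := by ring
  have summable := (hmean2.mul_right c₂).add (hmean.mul_right c₁)
  rw [← tsum_mul_right, ← tsum_mul_right,
    ← (hmean2.mul_right c₂).tsum_add (hmean.mul_right c₁)]
  simp only [conditional_moment] at summable ⊢
  exact hasSum_mul_dirichletMultinomialSplitting hα (fun y => by positivity)
    (sum_piAntidiag_apply_mul_apply_mul_dirichletMultinomial hA i j) summable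

end Splitting

theorem covariance_dirichlet_multinomial_splitting_general
    {ι : Type*} [Fintype ι] [DecidableEq ι] {p : ℕ → ℝ}
    (hmean : Summable (fun n : ℕ => (n : ℝ) * p n))
    (hmean2 : Summable (fun n : ℕ => (n : ℝ) * ((n : ℝ) - 1) * p n))
    {α : ι → ℝ} (hα : ∀ j, 0 ≤ α j) (hA : 0 < ∑ k, α k) (i j : ι) :
    (∑' y : ι → ℕ, (y i : ℝ) * (y j : ℝ) * dirichletMultinomialSplitting p α y)
        - (∑' y : ι → ℕ, (y i : ℝ) * dirichletMultinomialSplitting p α y)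
          * (∑' y : ι → ℕ, (y j : ℝ) * dirichletMultinomialSplitting p α y)
      = (1 / ((∑ k, α k) * ((∑ k, α k) + 1)))
          * ((((∑ k, α k) + 1) * (∑' n : ℕ, (n : ℝ) * p n)
                + (∑' n : ℕ, (n : ℝ) * ((n : ℝ) - 1) * p n))
              * α i * (if i = j then 1 else 0)
            + ((∑' n : ℕ, (n : ℝ) * ((n : ℝ) - 1) * p n)
                - (((∑ k, α k) + 1) / (∑ k, α k)) * (∑' n : ℕ, (n : ℝ) * p n) ^ 2)
              * α i * α j) := by
  rw [(hasSum_apply_mul_apply_mul_dirichletMultinomialSplitting hmean hmean2 hα hA i j).tsum_eq,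
    (hasSum_apply_mul_dirichletMultinomialSplitting hmean hα hA i).tsum_eq,
    (hasSum_apply_mul_dirichletMultinomialSplitting hmean hα hA j).tsum_eq]
  field_simp
  ring

/-- covariance of a Dirichlet multinomial splitting distribution. With
`μ₁ = ∑ n·p n` and `μ₂ = ∑ n(n−1)·p n` finite, for all `i, j`,
`Cov(Yᵢ,Yⱼ) = (1/(|α|(|α|+1)))·[((|α|+1)μ₁ + μ₂)·αᵢ·[i=j] + (μ₂ − ((|α|+1)/|α|)μ₁²)·αᵢαⱼ]`. -/
theorem covariance_dirichlet_multinomial_splitting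
    (J : ℕ) (hJ : 1 ≤ J)
    (p : ℕ → ℝ) (hp0 : ∀ n, 0 ≤ p n) (hp1 : ∑' n : ℕ, p n = 1)
    (hmean : Summable (fun n : ℕ => (n : ℝ) * p n))
    (hmean2 : Summable (fun n : ℕ => (n : ℝ) * ((n : ℝ) - 1) * p n))
    (α : Fin J → ℝ) (hα : ∀ j, 0 < α j)
    (P : (Fin J → ℕ) → ℝ)
    (hP : ∀ y : Fin J → ℕ,
      P y = p (∑ j, y j)
        * ((Nat.factorial (∑ j, y j) : ℝ) / poch (∑ j, α j) (∑ j, y j))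
        * ∏ j, poch (α j) (y j) / (Nat.factorial (y j) : ℝ)) :
    ∀ i j : Fin J,
      (∑' y : Fin J → ℕ, (y i : ℝ) * (y j : ℝ) * P y)
          - (∑' y : Fin J → ℕ, (y i : ℝ) * P y) * (∑' y : Fin J → ℕ, (y j : ℝ) * P y)
        = (1 / ((∑ j, α j) * ((∑ j, α j) + 1)))
            * ((((∑ j, α j) + 1) * (∑' n : ℕ, (n : ℝ) * p n)
                  + (∑' n : ℕ, (n : ℝ) * ((n : ℝ) - 1) * p n))
                * α i * (if i = j then 1 else 0)
              + ((∑' n : ℕ, (n : ℝ) * ((n : ℝ) - 1) * p n)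
                  - (((∑ j, α j) + 1) / (∑ j, α j)) * (∑' n : ℕ, (n : ℝ) * p n) ^ 2)
                * α i * α j) := by
  have hA : 0 < ∑ j, α j := Finset.sum_pos (fun j _ => hα j) ⟨⟨0, hJ⟩, Finset.mem_univ _⟩
  obtain rfl : P = dirichletMultinomialSplitting p α :=
    funext fun y => (hP y).trans (mul_assoc _ _ _)
  exact covariance_dirichlet_multinomial_splitting_general hmean hmean2 (fun j => (hα j).le) hA
end

section
/- (Product of two independent beta random variables.) Let a, b, c > 0 and let B(u,v) = Γ(u)Γ(v)/Γ(u+v) denote the Beta function. Then for every z ∈ (0,1), the density of the product X·Y of independent X ∼ β(a,b) and Y ∼ β(a+b,c) satisfies ∫_{z}^{1} [x^{a−1}·(1−x)^{b−1}/B(a,b)]·[(z/x)^{a+b−1}·(1−z/x)^{c−1}/B(a+b,c)]·(1/x) dx = z^{a−1}·(1−z)^{b+c−1}/B(a,b+c); that is, X·Y ∼ β(a, b+c). -/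
/-!
The density of `X * Y` is a multiplicative convolution, which is commutative: substitute
`y = z / x`. With the density of `Y` first, the power of `y` in `β(a + b, c)` cancels every
denominator of the density of `β(a, b)` at `z / y`, and what is left is `z ^ (a - 1)` times the
Euler integral `∫ y in z..1, (y - z) ^ (b - 1) * (1 - y) ^ (c - 1)`, an affine rescaling of the one
defining `B(b, c)`. The constants match because `B(a, b) * B(a + b, c)` and
`B(b, c) * B(a, b + c)` are both `Γ(a) * Γ(b) * Γ(c) / Γ(a + b + c)`.
-/

open Set

theorem betaFn_pos {u v : ℝ} (hu : 0 < u) (hv : 0 < v) : 0 < betaFn u v :=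
  ProbabilityTheory.beta_pos hu hv

theorem betaFn_mul_betaFn_add_left {a b c : ℝ} (hab : Real.Gamma (a + b) ≠ 0)
    (hbc : Real.Gamma (b + c) ≠ 0) :
    betaFn a b * betaFn (a + b) c = betaFn b c * betaFn a (b + c) := by
  simp only [betaFn, ← add_assoc]
  field_simp

theorem Gamma_add_ne_zero_of_betaFn_ne_zero {u v : ℝ} (h : betaFn u v ≠ 0) :
    Real.Gamma (u + v) ≠ 0 :=
  (div_ne_zero_iff.mp h).2

theorem betaIntegral_ofReal {u v : ℝ} (hu : 0 < u) (hv : 0 < v) :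
    Complex.betaIntegral u v = betaFn u v := by
  rw [Complex.betaIntegral_eq_Gamma_mul_div _ _ (by simpa) (by simpa), betaFn]
  simp only [← Complex.ofReal_add, Complex.Gamma_ofReal]
  push_cast
  rfl

theorem integral_rpow_mul_sub_rpow {u v p : ℝ} (hu : 0 < u) (hv : 0 < v) (hp : 0 < p) :
    ∫ x in (0 : ℝ)..p, x ^ (u - 1) * (p - x) ^ (v - 1) = p ^ (u + v - 1) * betaFn u v := by
  apply Complex.ofReal_injective
  rw [← intervalIntegral.integral_ofReal]
  calc ∫ x in (0 : ℝ)..p, ((x ^ (u - 1) * (p - x) ^ (v - 1) : ℝ) : ℂ)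
      = ∫ x in (0 : ℝ)..p, (x : ℂ) ^ ((u : ℂ) - 1) * ((p : ℂ) - x) ^ ((v : ℂ) - 1) := by
        refine intervalIntegral.integral_congr_Ioo_of_le hp.le fun x hx => ?_
        rw [Complex.ofReal_mul, Complex.ofReal_cpow hx.1.le,
          Complex.ofReal_cpow (sub_nonneg.mpr hx.2.le)]
        push_cast
        rfl
    _ = (p : ℂ) ^ ((u : ℂ) + v - 1) * betaFn u v := by
        rw [Complex.betaIntegral_scaled _ _ hp, betaIntegral_ofReal hu hv]
    _ = ((p ^ (u + v - 1) * betaFn u v : ℝ) : ℂ) := by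
        rw [Complex.ofReal_mul, Complex.ofReal_cpow hp.le]
        push_cast
        rfl

theorem integral_sub_rpow_mul_sub_rpow {u v p q : ℝ} (hu : 0 < u) (hv : 0 < v) (hpq : p < q) :
    ∫ y in p..q, (y - p) ^ (u - 1) * (q - y) ^ (v - 1) = (q - p) ^ (u + v - 1) * betaFn u v := by
  rw [← integral_rpow_mul_sub_rpow hu hv (sub_pos.mpr hpq), ← sub_self p,
    ← intervalIntegral.integral_comp_sub_right
      (fun x => x ^ (u - 1) * (q - p - x) ^ (v - 1)) p]
  simp only [sub_sub_sub_cancel_right]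

theorem integral_mul_comp_const_div_comm (f g : ℝ → ℝ) {k p q : ℝ} (hk : 0 < k) (hp : 0 < p)
    (hq : 0 < q) :
    ∫ x in p..q, f x * g (k / x) * (1 / x) = ∫ y in k / q..k / p, g y * f (k / y) * (1 / y) := by
  have pos_of_mem : ∀ x ∈ uIcc p q, 0 < x := fun x hx => (lt_min hp hq).trans_le hx.1
  have hasDerivAt_const_div : ∀ x ∈ uIcc p q, HasDerivAt (fun x => k / x) (-(k / x ^ 2)) x := by
    intro x hx
    simpa [neg_div] using (hasDerivAt_const x k).fun_div (hasDerivAt_id x) (pos_of_mem x hx).ne'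
  rw [intervalIntegral.integral_symm (k / p) (k / q),
    ← intervalIntegral.integral_comp_mul_deriv_of_deriv_nonpos (f := fun x => k / x)
      (fun x hx => (hasDerivAt_const_div x hx).continuousAt.continuousWithinAt)
      (fun x hx => hasDerivAt_const_div x (Ioo_subset_Icc_self hx))
      (fun x _ => neg_nonpos.mpr (by positivity)),
    ← intervalIntegral.integral_neg]
  refine intervalIntegral.integral_congr fun x hx => ?_
  have hx_pos := pos_of_mem x hx
  simp only [Function.comp_apply, div_div_cancel₀ hk.ne']
  field_simp

theorem div_rpow_mul_one_sub_div_rpow_mul_rpow {y z : ℝ} (a b : ℝ) (hz : 0 ≤ z) (hy : 0 < y)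
    (hzy : z ≤ y) :
    (z / y) ^ (a - 1) * (1 - z / y) ^ (b - 1) * (y ^ (a + b - 1) * (1 / y)) =
      z ^ (a - 1) * (y - z) ^ (b - 1) := by
  have exponent_split : y ^ (a + b - 1) = y ^ (a - 1) * y ^ (b - 1) * y := by
    rw [← Real.rpow_add hy, ← Real.rpow_add_one hy.ne']
    ring_nf
  rw [one_sub_div hy.ne', Real.div_rpow hz hy.le, Real.div_rpow (sub_nonneg.mpr hzy) hy.le,
    exponent_split]
  have := Real.rpow_pos_of_pos hy (a - 1)
  have := Real.rpow_pos_of_pos hy (b - 1)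
  field_simp

theorem integral_beta_kernel_mul_beta_kernel (a : ℝ) {b c z : ℝ} (hb : 0 < b) (hc : 0 < c)
    (hz : z ∈ Ioo (0 : ℝ) 1) :
    ∫ x in z..1, x ^ (a - 1) * (1 - x) ^ (b - 1) *
        ((z / x) ^ (a + b - 1) * (1 - z / x) ^ (c - 1)) * (1 / x) =
      z ^ (a - 1) * (1 - z) ^ (b + c - 1) * betaFn b c := by
  obtain ⟨hz_pos, hz_lt⟩ := hz
  calc ∫ x in z..1, x ^ (a - 1) * (1 - x) ^ (b - 1) *
        ((z / x) ^ (a + b - 1) * (1 - z / x) ^ (c - 1)) * (1 / x)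
      = ∫ y in z..1, y ^ (a + b - 1) * (1 - y) ^ (c - 1) *
          ((z / y) ^ (a - 1) * (1 - z / y) ^ (b - 1)) * (1 / y) := by
        simpa only [div_one, div_self hz_pos.ne'] using
          integral_mul_comp_const_div_comm (fun x => x ^ (a - 1) * (1 - x) ^ (b - 1))
            (fun y => y ^ (a + b - 1) * (1 - y) ^ (c - 1)) hz_pos hz_pos one_pos
    _ = ∫ y in z..1, z ^ (a - 1) * ((y - z) ^ (b - 1) * (1 - y) ^ (c - 1)) := by
        refine intervalIntegral.integral_congr_Ioo_of_le hz_lt.le fun y hy => ?_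
        have cancellation := div_rpow_mul_one_sub_div_rpow_mul_rpow a b hz_pos.le
          (hz_pos.trans hy.1) hy.1.le
        linear_combination (1 - y) ^ (c - 1) * cancellation
    _ = z ^ (a - 1) * (1 - z) ^ (b + c - 1) * betaFn b c := by
        rw [intervalIntegral.integral_const_mul, integral_sub_rpow_mul_sub_rpow hb hc hz_lt,
          mul_assoc]

/-- For `a < 0` the integral defining `B(a, b)` diverges, and `betaFn a b` is its analytic
continuation. -/
theorem beta_product_density_general {a b c z : ℝ} (hb : 0 < b) (hc : 0 < c)
    (h_normalizer : betaFn a b * betaFn (a + b) c ≠ 0) (hz : z ∈ Ioo (0 : ℝ) 1) :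
    ∫ x in z..1,
        (x ^ (a - 1) * (1 - x) ^ (b - 1) / betaFn a b)
          * ((z / x) ^ (a + b - 1) * (1 - z / x) ^ (c - 1) / betaFn (a + b) c)
          * (1 / x)
      = z ^ (a - 1) * (1 - z) ^ (b + c - 1) / betaFn a (b + c) := by
  have hbc : betaFn b c ≠ 0 := (betaFn_pos hb hc).ne'
  have normalizer_eq : betaFn a b * betaFn (a + b) c = betaFn b c * betaFn a (b + c) :=
    betaFn_mul_betaFn_add_left
      (Gamma_add_ne_zero_of_betaFn_ne_zero (left_ne_zero_of_mul h_normalizer))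
      (Gamma_add_ne_zero_of_betaFn_ne_zero hbc)
  calc _ = ∫ x in z..1, x ^ (a - 1) * (1 - x) ^ (b - 1) *
          ((z / x) ^ (a + b - 1) * (1 - z / x) ^ (c - 1)) * (1 / x) /
            (betaFn a b * betaFn (a + b) c) := by
        congr 1 with x
        ring
    _ = z ^ (a - 1) * (1 - z) ^ (b + c - 1) * betaFn b c /
          (betaFn b c * betaFn a (b + c)) := by
        rw [intervalIntegral.integral_div, integral_beta_kernel_mul_beta_kernel a hb hc hz,
          normalizer_eq]
    _ = z ^ (a - 1) * (1 - z) ^ (b + c - 1) / betaFn a (b + c) := by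
        rw [mul_comm (betaFn b c), mul_div_mul_right _ _ hbc]

/-- the product of two independent beta random variables `X ∼ β(a,b)` and
`Y ∼ β(a+b,c)` follows `β(a, b+c)`: for every `z ∈ (0,1)`,
`∫_z^1 [x^{a−1}(1−x)^{b−1}/B(a,b)] [(z/x)^{a+b−1}(1−z/x)^{c−1}/B(a+b,c)] (1/x) dx
  = z^{a−1}(1−z)^{b+c−1}/B(a,b+c)`. -/
theorem beta_product_density
    (a b c : ℝ) (ha : 0 < a) (hb : 0 < b) (hc : 0 < c)
    (z : ℝ) (hz : z ∈ Set.Ioo (0 : ℝ) 1) :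
    ∫ x in z..1,
        (x ^ (a - 1) * (1 - x) ^ (b - 1) / betaFn a b)
          * ((z / x) ^ (a + b - 1) * (1 - z / x) ^ (c - 1) / betaFn (a + b) c)
          * (1 / x)
      = z ^ (a - 1) * (1 - z) ^ (b + c - 1) / betaFn a (b + c) :=
  beta_product_density_general hb hc
    (mul_pos (betaFn_pos ha hb) (betaFn_pos (add_pos ha hb) hc)).ne' hz
end
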